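/- arXiv:2509.02162 — 2 statements merged into one kernel-verified Lean document; each statement's English description precedes it below -/
import Mathlib

section
/- Let n ≥ 2, let 𝓕ⁿₙ ⊂ 𝓔 ⊂ 𝓛ⁿ, let H = u⊥ + t₀u (u a unit vector, t₀ ∈ ℝ) be a hyperplane in ℝⁿ, and let 0 < b < 1. Let ∂ ∈ 𝒥_H(𝓔) be a map whose associated contraction is ψ_∂(x) = x + (b − 1)(⟨x,u⟩ − t₀)u (the Brock set map with parameter b). Then ∂ cannot be weakly approximated on 𝓔 by finite compositions of polarizations; that is, it is not the case that for every A ∈ 𝓔 there exist finite compositions ∂_{A,k} of polarizations (with respect to arbitrary oriented hyperplanes) such that ‖1_{∂_{A,k}A} − 1_{∂A}‖_{L¹} → 0 as k → ∞. -/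
open MeasureTheory Metric Filter Topology
open scoped RealInnerProductSpace

noncomputable section

abbrev Euc (n : ℕ) : Type := EuclideanSpace ℝ (Fin n)

/-- `A` is essentially contained in `B` (up to a set of measure zero). -/
def essSub {n : ℕ} (A B : Set (Euc n)) : Prop := volume (A \ B) = 0

/-- `A` is essentially equal to `B` (up to a set of measure zero). -/
def essEq {n : ℕ} (A B : Set (Euc n)) : Prop := volume ((A \ B) ∪ (B \ A)) = 0

/-- The symmetric difference of two sets. -/
def sd {n : ℕ} (A B : Set (Euc n)) : Set (Euc n) := (A \ B) ∪ (B \ A)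

/-- The infinite spherical cylinder of radius `ρ` whose axis passes through `c`
in direction `u`. -/
def cyl {n : ℕ} (u c : Euc n) (ρ : ℝ) : Set (Euc n) :=
  {y | ‖(y - c) - ⟪y - c, u⟫ • u‖ ≤ ρ}

/-- Membership in `𝓕ⁿₙ`, the family of (nonempty) finite unions of closed balls. -/
def isFUB {n : ℕ} (A : Set (Euc n)) : Prop :=
  ∃ l : List (Euc n × ℝ), l ≠ [] ∧ (∀ p ∈ l, 0 < p.2) ∧
    A = ⋃ p ∈ l, closedBall p.1 p.2

/-- The polarization of `A` with respect to the oriented hyperplane `{x : ⟪x,v⟫ = c}` whose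
positive closed halfspace is `{x : ⟪x,v⟫ ≥ c}`. -/
def polzn {n : ℕ} (v : Euc n) (c : ℝ) (A : Set (Euc n)) : Set (Euc n) :=
  {x | c ≤ ⟪x, v⟫ ∧ (x ∈ A ∨ x - (2 * (⟪x, v⟫ - c)) • v ∈ A)} ∪
  {x | ⟪x, v⟫ ≤ c ∧ x ∈ A ∧ x - (2 * (⟪x, v⟫ - c)) • v ∈ A}

/-- `D` is a finite composition of polarizations (with respect to arbitrary oriented
hyperplanes). -/
def isPolComp {n : ℕ} (D : Set (Euc n) → Set (Euc n)) : Prop :=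
  ∃ l : List (Euc n × ℝ), l ≠ [] ∧ (∀ p ∈ l, ‖p.1‖ = 1) ∧
    D = (l.map fun p => polzn p.1 p.2).foldr (· ∘ ·) id

/-!
A composition of polarizations maps the ball about `x` into the ball of equal radius about `f x`,
where `f` is the corresponding composition of foldings along hyperplanes. Choose a unit vector `e`
along which the contraction `ψ` of the set map commutes with translations. A single finite union of
balls, containing for each `x` in a finite set two small balls symmetric about `x` far out in the
directions `±e`, forces `f` to be close to `ψ` at all these `x` as soon as the composition of
polarizations is `L¹`-close to the set map on that union: the images of the two small balls leave
`f x` no room away from their midpoint `ψ x`. Hence `ψ` is a pointwise limit of compositions of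
foldings.

But if compositions of foldings converge to a map which does not contract distances by more than a
fixed factor, then on a given ball they are eventually isometries: a folding whose hyperplane meets
the ball would bring a point just outside the ball too close to a point of it. So `ψ` would be an
isometry, which the contraction of the Brock set map is not.
-/

section Folding

variable {E : Type*} [NormedAddCommGroup E] [InnerProductSpace ℝ E] {v : E}

/-- The reflection in the hyperplane `{x | ⟪x, v⟫ = c}` for a unit vector `v`; it is assembled from
a linear reflection and a translation so that it is an isometry for every `v`. -/
def hyperplaneReflection (v : E) (c : ℝ) : E ≃ᵢ E :=
  (ℝ ∙ v)ᗮ.reflection.toIsometryEquiv.trans (IsometryEquiv.addRight ((2 * c) • v))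

theorem hyperplaneReflection_apply (hv : ‖v‖ = 1) (c : ℝ) (x : E) :
    hyperplaneReflection v c x = x - (2 * (⟪x, v⟫ - c)) • v := by
  have h : (ℝ ∙ v)ᗮ.reflection x = x - (2 * ⟪x, v⟫) • v := by
    rw [Submodule.reflection_orthogonal_apply, Submodule.reflection_singleton_apply]
    simp [hv, real_inner_comm, mul_smul, two_smul]
  simp only [hyperplaneReflection, IsometryEquiv.trans_apply, IsometryEquiv.addRight_apply,
    LinearIsometryEquiv.coe_toIsometryEquiv, h]
  module

theorem inner_hyperplaneReflection (hv : ‖v‖ = 1) (c : ℝ) (x : E) :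
    ⟪hyperplaneReflection v c x, v⟫ = 2 * c - ⟪x, v⟫ := by
  rw [hyperplaneReflection_apply hv, inner_sub_left, real_inner_smul_left,
    inner_self_eq_one_of_norm_eq_one hv]
  ring

theorem hyperplaneReflection_involutive (hv : ‖v‖ = 1) (c : ℝ) :
    Function.Involutive (hyperplaneReflection v c) := fun x => by
  rw [hyperplaneReflection_apply hv, inner_hyperplaneReflection hv, hyperplaneReflection_apply hv]
  module

theorem hyperplaneReflection_eq_self (hv : ‖v‖ = 1) {c : ℝ} {x : E} (hx : ⟪x, v⟫ = c) :
    hyperplaneReflection v c x = x := by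
  simp [hyperplaneReflection_apply hv, hx]

theorem hyperplaneReflection_neg (hv : ‖v‖ = 1) (c : ℝ) (x : E) :
    hyperplaneReflection (-v) (-c) x = hyperplaneReflection v c x := by
  rw [hyperplaneReflection_apply hv, hyperplaneReflection_apply (by rwa [norm_neg]),
    inner_neg_right]
  module

theorem dist_hyperplaneReflection_left (hv : ‖v‖ = 1) (c : ℝ) (x y : E) :
    dist (hyperplaneReflection v c x) y = dist x (hyperplaneReflection v c y) := by
  rw [← (hyperplaneReflection v c).dist_eq, hyperplaneReflection_involutive hv]

theorem sq_dist_hyperplaneReflection (hv : ‖v‖ = 1) (c : ℝ) (x y : E) :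
    dist x (hyperplaneReflection v c y) ^ 2 =
      dist x y ^ 2 + 4 * (⟪x, v⟫ - c) * (⟪y, v⟫ - c) := by
  have h : x - hyperplaneReflection v c y = (x - y) + (2 * (⟪y, v⟫ - c)) • v := by
    rw [hyperplaneReflection_apply hv]
    module
  rw [dist_eq_norm, dist_eq_norm, h, norm_add_sq_real, norm_smul, real_inner_smul_right,
    inner_sub_left, hv, mul_one, Real.norm_eq_abs, sq_abs]
  ring

/-- The map folding `E` along the hyperplane `{x | ⟪x, v⟫ = c}` onto the halfspace
`{x | c ≤ ⟪x, v⟫}`: the contraction associated with the polarization with respect to it. -/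
def hyperplaneFold (v : E) (c : ℝ) (x : E) : E :=
  if c ≤ ⟪x, v⟫ then x else hyperplaneReflection v c x

theorem hyperplaneFold_of_le {c : ℝ} {x : E} (hx : c ≤ ⟪x, v⟫) : hyperplaneFold v c x = x :=
  if_pos hx

theorem hyperplaneFold_of_ge (hv : ‖v‖ = 1) {c : ℝ} {x : E} (hx : ⟪x, v⟫ ≤ c) :
    hyperplaneFold v c x = hyperplaneReflection v c x := by
  rcases hx.lt_or_eq with hlt | heq
  · exact if_neg hlt.not_ge
  · rw [hyperplaneFold_of_le heq.ge, hyperplaneReflection_eq_self hv heq]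

theorem hyperplaneFold_eq_or_eq (v : E) (c : ℝ) (x : E) :
    hyperplaneFold v c x = x ∨ hyperplaneFold v c x = hyperplaneReflection v c x :=
  ite_eq_or_eq _ _ _

theorem le_inner_hyperplaneFold (hv : ‖v‖ = 1) (c : ℝ) (x : E) :
    c ≤ ⟪hyperplaneFold v c x, v⟫ := by
  rcases le_total c ⟪x, v⟫ with hx | hx
  · rwa [hyperplaneFold_of_le hx]
  · rw [hyperplaneFold_of_ge hv hx, inner_hyperplaneReflection hv]
    linarith

theorem hyperplaneFold_neg (hv : ‖v‖ = 1) (c : ℝ) (x : E) :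
    hyperplaneFold (-v) (-c) x = hyperplaneReflection v c (hyperplaneFold v c x) := by
  have hv' : ‖-v‖ = 1 := by rwa [norm_neg]
  rcases le_total c ⟪x, v⟫ with hx | hx
  · rw [hyperplaneFold_of_le hx,
      hyperplaneFold_of_ge hv' (by rwa [inner_neg_right, neg_le_neg_iff]),
      hyperplaneReflection_neg hv]
  · rw [hyperplaneFold_of_ge hv hx, hyperplaneReflection_involutive hv,
      hyperplaneFold_of_le (by rwa [inner_neg_right, neg_le_neg_iff])]

theorem dist_hyperplaneFold_le (hv : ‖v‖ = 1) {c : ℝ} {x : E} (hx : c ≤ ⟪x, v⟫) (y : E) :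
    dist x (hyperplaneFold v c y) ≤ dist x y := by
  rcases le_total c ⟪y, v⟫ with hy | hy
  · rw [hyperplaneFold_of_le hy]
  · rw [hyperplaneFold_of_ge hv hy]
    refine le_of_sq_le_sq ?_ dist_nonneg
    rw [sq_dist_hyperplaneReflection hv]
    nlinarith [mul_nonneg (sub_nonneg.2 hx) (sub_nonneg.2 hy)]

theorem hyperplaneFold_hyperplaneReflection (hv : ‖v‖ = 1) (c : ℝ) (x : E) :
    hyperplaneFold v c (hyperplaneReflection v c x) = hyperplaneFold v c x := by
  rcases le_total c ⟪x, v⟫ with hx | hx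
  · rw [hyperplaneFold_of_le hx, hyperplaneFold_of_ge hv, hyperplaneReflection_involutive hv]
    rw [inner_hyperplaneReflection hv]
    linarith
  · rw [hyperplaneFold_of_ge hv hx, hyperplaneFold_of_le]
    rw [inner_hyperplaneReflection hv]
    linarith

theorem lipschitzWith_hyperplaneFold (hv : ‖v‖ = 1) (c : ℝ) :
    LipschitzWith 1 (hyperplaneFold v c) := by
  refine LipschitzWith.mk_one fun x y => ?_
  have h := le_inner_hyperplaneFold hv c x
  rcases hyperplaneFold_eq_or_eq v c x with hx | hx <;> rw [hx] at h ⊢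
  · exact dist_hyperplaneFold_le hv h y
  · calc dist (hyperplaneReflection v c x) (hyperplaneFold v c y)
        = dist (hyperplaneReflection v c x)
            (hyperplaneFold v c (hyperplaneReflection v c y)) := by
          rw [hyperplaneFold_hyperplaneReflection hv]
      _ ≤ dist (hyperplaneReflection v c x) (hyperplaneReflection v c y) :=
          dist_hyperplaneFold_le hv h _
      _ = dist x y := (hyperplaneReflection v c).dist_eq x y

end Folding

theorem exists_forall_dist_lt_of_mem_closure {X Y : Type*} [PseudoMetricSpace X]
    [PseudoMetricSpace Y] {L : NNReal} {F : Set (X → Y)} (hF : ∀ f ∈ F, LipschitzWith L f)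
    {ψ : X → Y} (hψ : ψ ∈ closure F) {s : Set X} (hs : IsCompact s) {ε : ℝ} (hε : 0 < ε) :
    ∃ f ∈ F, ∀ x ∈ s, dist (f x) (ψ x) < ε := by
  have hequi : EquicontinuousOn (Subtype.val : F → X → Y) s :=
    (LipschitzWith.uniformEquicontinuous (Subtype.val : F → X → Y) L
      fun f => hF f.1 f.2).equicontinuous.equicontinuousOn s
  have := mem_closure_iff_comap_neBot.1 hψ
  have htendsto := (EquicontinuousOn.tendsto_uniformOnFun_iff_pi' (𝔖 := {s})
    (by simpa only [Set.mem_singleton_iff, forall_eq])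
    (by simpa only [Set.mem_singleton_iff, forall_eq]) (comap (Subtype.val : F → X → Y) (𝓝 ψ)) ψ).2
    ((continuous_pi fun x => continuous_apply x.1).continuousAt.tendsto.comp tendsto_comap)
  obtain ⟨f, hf⟩ := (Metric.tendstoUniformlyOn_iff.1
    (UniformOnFun.tendsto_iff_tendstoUniformlyOn.1 htendsto s rfl) ε hε).exists
  exact ⟨f, f.2, fun x hx => (dist_comm _ _).trans_lt (hf x hx)⟩

section Rigidity

variable {E : Type*} [NormedAddCommGroup E] [InnerProductSpace ℝ E] {v : E}

/-- Finite compositions of foldings along hyperplanes: the contractions associated with finite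
compositions of polarizations. -/
inductive IsFoldComp : (E → E) → Prop
  | id : IsFoldComp id
  | fold_comp {v : E} (hv : ‖v‖ = 1) (c : ℝ) {f : E → E} (hf : IsFoldComp f) :
      IsFoldComp (hyperplaneFold v c ∘ f)

theorem IsFoldComp.lipschitzWith {f : E → E} (hf : IsFoldComp f) : LipschitzWith 1 f := by
  induction hf with
  | id => exact LipschitzWith.id
  | fold_comp hv c _ ih => simpa only [mul_one] using (lipschitzWith_hyperplaneFold hv c).comp ih

theorem exists_mem_closedBall_dist_le {C : Set E} (hC : Convex ℝ C) {o q : E} {ρ s : ℝ}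
    (hρ : 0 < ρ) (ho : o ∈ C) (hq : q ∈ C) (hqo : dist q o ^ 2 ≤ ρ ^ 2 + s ^ 2) :
    ∃ z ∈ C ∩ closedBall o ρ, dist q z ≤ s ^ 2 / (2 * ρ) := by
  set m := ρ + s ^ 2 / (2 * ρ) with hm
  have hρm : ρ ≤ m := by rw [hm]; linarith [show 0 ≤ s ^ 2 / (2 * ρ) by positivity]
  have hm0 : 0 < m := hρ.trans_le hρm
  have hqm : dist q o ≤ m := by
    refine le_of_sq_le_sq (hqo.trans ?_) hm0.le
    have : m ^ 2 = ρ ^ 2 + s ^ 2 + (s ^ 2 / (2 * ρ)) ^ 2 := by rw [hm]; field_simp; ring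
    linarith [sq_nonneg (s ^ 2 / (2 * ρ))]
  have hθ : ρ / m ∈ Set.Icc (0 : ℝ) 1 := ⟨by positivity, (div_le_one hm0).2 hρm⟩
  refine ⟨AffineMap.lineMap o q (ρ / m), ⟨hC.lineMap_mem ho hq hθ, ?_⟩, ?_⟩
  · rw [mem_closedBall, dist_lineMap_left, dist_comm o, Real.norm_of_nonneg hθ.1]
    calc ρ / m * dist q o ≤ ρ / m * m := by gcongr
      _ = ρ := div_mul_cancel₀ _ hm0.ne'
  · rw [dist_comm, dist_lineMap_right, dist_comm o, Real.norm_of_nonneg (sub_nonneg.2 hθ.2)]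
    calc (1 - ρ / m) * dist q o ≤ (1 - ρ / m) * m := by
          have := sub_nonneg.2 hθ.2; gcongr
      _ = s ^ 2 / (2 * ρ) := by rw [sub_mul, div_mul_cancel₀ _ hm0.ne', hm]; ring

theorem sq_dist_le_of_inner_le (hv : ‖v‖ = 1) {o q : E} {ρ s : ℝ} (hρ : 0 ≤ ρ)
    (hin : ⟪o, v⟫ - ρ ≤ ⟪q, v⟫) (hq : dist q (o - ρ • v) ≤ s) :
    dist q o ^ 2 ≤ ρ ^ 2 + s ^ 2 := by
  have h : dist q (o - ρ • v) ^ 2 = dist q o ^ 2 + 2 * ρ * (⟪q, v⟫ - ⟪o, v⟫) + ρ ^ 2 := by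
    rw [dist_eq_norm, dist_eq_norm, show q - (o - ρ • v) = (q - o) + ρ • v by abel,
      norm_add_sq_real, norm_smul, real_inner_smul_right, inner_sub_left, hv, mul_one,
      Real.norm_eq_abs, sq_abs]
    ring
  have hs : dist q (o - ρ • v) ^ 2 ≤ s ^ 2 := by gcongr
  nlinarith [mul_le_mul_of_nonneg_left hin hρ]

variable {c ρ δ K : ℝ} {o : E}

/- A map into the halfspace which fixes the part of the ball lying there and almost fixes the pole
`o - ρ • v` brings the point at distance `δ` beyond that pole too close to a point it fixes. -/
theorem lt_dist_of_forall_le_inner (hv : ‖v‖ = 1) {F : E → E} (hδ : 0 < δ) (hK : 0 ≤ K)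
    (hKδ : 2 * K * δ ≤ ρ) (hρ : 0 < ρ) (hF : LipschitzWith 1 F) (hFc : ∀ x, c ≤ ⟪F x, v⟫)
    (hfix : ∀ x ∈ closedBall o ρ, c ≤ ⟪x, v⟫ → F x = x)
    (hco : ∀ x ∈ closedBall o (ρ + δ), ∀ y ∈ closedBall o (ρ + δ),
      dist x y ≤ K * dist (F x) (F y) + δ / 4)
    (ho : c ≤ ⟪o, v⟫) (hc : ⟪o, v⟫ - ρ ≤ c) :
    δ / 4 < dist (F (o - ρ • v)) (o - ρ • v) := by
  by_contra! hp
  set p := o - ρ • v with hp_def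
  set x := o - (ρ + δ) • v with hx_def
  have hxo : dist x o = ρ + δ := by
    rw [hx_def, dist_self_sub_left, norm_smul, hv, mul_one, Real.norm_of_nonneg (by positivity)]
  have hxp : dist x p = δ := by
    rw [dist_eq_norm, show x - p = (-δ) • v by rw [hx_def, hp_def]; module, norm_smul, hv,
      mul_one, norm_neg, Real.norm_of_nonneg hδ.le]
  have hFx : dist (F x) p ≤ 5 / 4 * δ := by
    have h := hF.dist_le_mul x p
    rw [hxp, NNReal.coe_one, one_mul] at h
    linarith [dist_triangle (F x) (F p) p]
  have hC : Convex ℝ {y : E | c ≤ ⟪y, v⟫} :=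
    convex_halfSpace_ge ((innerₗ E).flip v).isLinear c
  obtain ⟨z, ⟨hzc, hzo⟩, hFxz⟩ := exists_mem_closedBall_dist_le hC hρ ho (hFc x)
    (sq_dist_le_of_inner_le hv hρ.le (hc.trans (hFc x)) hFx)
  have hxz : δ ≤ dist x z := by
    linarith [dist_triangle x z o, mem_closedBall.1 hzo]
  have hlt : K * ((5 / 4 * δ) ^ 2 / (2 * ρ)) < 3 / 4 * δ := by
    rw [mul_div_assoc', div_lt_iff₀ (by positivity)]
    nlinarith [mul_le_mul_of_nonneg_right hKδ hδ.le, mul_pos hρ hδ]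
  have hco' := hco x (mem_closedBall.2 hxo.le) z
    (closedBall_subset_closedBall (by linarith) hzo)
  rw [hfix z hzo hzc] at hco'
  linarith [mul_le_mul_of_nonneg_left hFxz hK]

theorem radius_le_of_dist_le_hyperplaneFold (hv : ‖v‖ = 1) {g : E → E} (hδ : 0 < δ)
    (hK : 0 ≤ K) (hKδ : 2 * K * δ ≤ ρ) (hρ : 0 < ρ) (hg : LipschitzWith 1 g)
    (hid : ∀ x ∈ closedBall o ρ, g x = x)
    (hco : ∀ x ∈ closedBall o (ρ + δ), ∀ y ∈ closedBall o (ρ + δ),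
      dist x y ≤ K * dist (hyperplaneFold v c (g x)) (hyperplaneFold v c (g y)) + δ / 4)
    (ho : c ≤ ⟪o, v⟫) : ρ ≤ ⟪o, v⟫ - c := by
  by_contra! hc
  have hfix : ∀ x ∈ closedBall o ρ, c ≤ ⟪x, v⟫ → hyperplaneFold v c (g x) = x :=
    fun x hx hxc => by rw [hid x hx, hyperplaneFold_of_le hxc]
  have hinner : ∀ t : ℝ, ⟪o - t • v, v⟫ = ⟪o, v⟫ - t := fun t => by
    rw [inner_sub_left, real_inner_smul_left, inner_self_eq_one_of_norm_eq_one hv, mul_one]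
  have hmem : ∀ t : ℝ, -ρ ≤ t → t ≤ ρ → o - t • v ∈ closedBall o ρ := fun t h₁ h₂ => by
    rw [mem_closedBall, dist_self_sub_left, norm_smul, hv, mul_one]
    exact abs_le.2 ⟨h₁, h₂⟩
  have hsub : closedBall o ρ ⊆ closedBall o (ρ + δ) := closedBall_subset_closedBall (by linarith)
  set p := o - ρ • v
  set p' := o - (2 * (⟪o, v⟫ - c) - ρ) • v
  have hp : p ∈ closedBall o ρ := hmem _ (by linarith) le_rfl
  have hp' : p' ∈ closedBall o ρ := hmem _ (by linarith) (by linarith)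
  have hFp : hyperplaneFold v c (g p) = p' := by
    rw [hid p hp, hyperplaneFold_of_ge hv (by rw [hinner]; linarith),
      hyperplaneReflection_apply hv, hinner]
    module
  have hFp' : hyperplaneFold v c (g p') = p' := hfix p' hp' (by rw [hinner]; linarith)
  have hpp' : dist p' p ≤ δ / 4 := by
    simpa only [hFp, hFp', dist_self, mul_zero, zero_add] using hco p' (hsub hp') p (hsub hp)
  have hF : LipschitzWith 1 (hyperplaneFold v c ∘ g) := by
    simpa only [mul_one] using (lipschitzWith_hyperplaneFold hv c).comp hg
  have hlt := lt_dist_of_forall_le_inner hv hδ hK hKδ hρ hF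
    (fun x => le_inner_hyperplaneFold hv c (g x)) hfix hco ho (by linarith)
  rw [Function.comp_apply, hFp] at hlt
  exact hlt.not_ge hpp'

theorem hyperplaneFold_eqOn_or_eqOn (hv : ‖v‖ = 1) {g : E → E} (hδ : 0 < δ)
    (hK : 0 ≤ K) (hKδ : 2 * K * δ ≤ ρ) (hρ : 0 < ρ) (hg : LipschitzWith 1 g)
    (hid : ∀ x ∈ closedBall o ρ, g x = x)
    (hco : ∀ x ∈ closedBall o (ρ + δ), ∀ y ∈ closedBall o (ρ + δ),
      dist x y ≤ K * dist (hyperplaneFold v c (g x)) (hyperplaneFold v c (g y)) + δ / 4) :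
    Set.EqOn (hyperplaneFold v c) id (closedBall o ρ) ∨
      Set.EqOn (hyperplaneFold v c) (hyperplaneReflection v c) (closedBall o ρ) := by
  have hinner : ∀ x ∈ closedBall o ρ, |⟪x, v⟫ - ⟪o, v⟫| ≤ ρ := fun x hx => by
    rw [← inner_sub_left]
    simpa [hv] using (abs_real_inner_le_norm (x - o) v).trans
      (mul_le_mul_of_nonneg_right (mem_closedBall_iff_norm.1 hx) (norm_nonneg v))
  rcases le_total c ⟪o, v⟫ with ho | ho
  · left
    intro x hx
    have h := radius_le_of_dist_le_hyperplaneFold hv hδ hK hKδ hρ hg hid hco ho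
    exact hyperplaneFold_of_le (by linarith [(abs_le.1 (hinner x hx)).1])
  · right
    intro x hx
    have h := radius_le_of_dist_le_hyperplaneFold (v := -v) (c := -c) (by rwa [norm_neg]) hδ hK
      hKδ hρ hg hid (by simpa only [hyperplaneFold_neg hv, IsometryEquiv.dist_eq] using hco)
      (by rwa [inner_neg_right, neg_le_neg_iff])
    rw [inner_neg_right] at h
    exact hyperplaneFold_of_ge hv (by linarith [(abs_le.1 (hinner x hx)).2])

theorem IsFoldComp.exists_isometryEquiv {f : E → E} (hf : IsFoldComp f) (hδ : 0 < δ)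
    (hK : 0 ≤ K) (hKδ : 2 * K * δ ≤ ρ) (hρ : 0 < ρ)
    (hco : ∀ x ∈ closedBall o (ρ + δ), ∀ y ∈ closedBall o (ρ + δ),
      dist x y ≤ K * dist (f x) (f y) + δ / 4) :
    ∃ T : E ≃ᵢ E, Set.EqOn f T (closedBall o ρ) := by
  induction hf with
  | id => exact ⟨IsometryEquiv.refl E, fun _ _ => rfl⟩
  | @fold_comp v hv c f hf ih =>
    obtain ⟨T, hT⟩ := ih fun x hx y hy => (hco x hx y hy).trans (by
      rw [Function.comp_apply, Function.comp_apply]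
      gcongr
      simpa only [NNReal.coe_one, one_mul]
        using (lipschitzWith_hyperplaneFold hv c).dist_le_mul (f x) (f y))
    have hsymm : ∀ r, ∀ x ∈ closedBall (T o) r, T.symm x ∈ closedBall o r := fun r x hx => by
      rwa [mem_closedBall, ← T.dist_eq, T.apply_symm_apply]
    have hT' : ∀ x ∈ closedBall o ρ, T x ∈ closedBall (T o) ρ := fun x hx => by
      rwa [mem_closedBall, T.dist_eq]
    have hg : LipschitzWith 1 (f ∘ T.symm) := by
      simpa only [mul_one] using hf.lipschitzWith.comp T.symm.isometry.lipschitz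
    have hid : ∀ x ∈ closedBall (T o) ρ, (f ∘ T.symm) x = x := fun x hx => by
      rw [Function.comp_apply, hT (hsymm ρ x hx), T.apply_symm_apply]
    rcases hyperplaneFold_eqOn_or_eqOn hv hδ hK hKδ hρ hg hid fun x hx y hy => by
        rw [← T.symm.dist_eq]
        exact hco _ (hsymm _ x hx) _ (hsymm _ y hy) with h | h
    · exact ⟨T, fun x hx => by rw [Function.comp_apply, hT hx, h (hT' x hx), id_eq]⟩
    · exact ⟨T.trans (hyperplaneReflection v c), fun x hx => by
        rw [Function.comp_apply, hT hx, h (hT' x hx), IsometryEquiv.trans_apply]⟩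

/- Fold compositions close to `ψ` inherit its lower distance bound up to a small error, so they are
isometric on large balls. -/
theorem isometry_of_mem_closure_isFoldComp [ProperSpace E] {ψ : E → E}
    (hψ : ψ ∈ closure {f | IsFoldComp f}) {L : NNReal} (hL : AntilipschitzWith L ψ) :
    Isometry ψ := by
  refine Isometry.of_dist_eq fun x y => eq_of_forall_dist_le fun ε hε => ?_
  set ρ := dist x y + 1
  have hρ : 0 < ρ := by positivity
  set δ := ρ / (2 * L + 1)
  have hδ : 0 < δ := by positivity
  have hLδ : 2 * L * δ ≤ ρ := by
    linarith [show (2 * L + 1) * δ = ρ from mul_div_cancel₀ _ (by positivity)]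
  set η := min (δ / (8 * L + 1)) (ε / 2)
  have hη : 0 < η := by positivity
  have hLη : 8 * L * η ≤ δ := by
    have : (8 * L + 1) * η ≤ δ := (le_div_iff₀' (by positivity)).1 (min_le_left _ _)
    linarith
  obtain ⟨f, hf, hfψ⟩ := exists_forall_dist_lt_of_mem_closure
    (fun f hf => IsFoldComp.lipschitzWith hf) hψ (isCompact_closedBall x (ρ + δ)) hη
  have hdist : ∀ x' ∈ closedBall x (ρ + δ), ∀ y' ∈ closedBall x (ρ + δ),
      |dist (ψ x') (ψ y') - dist (f x') (f y')| ≤ 2 * η := fun x' hx' y' hy' => by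
    have h := dist_dist_dist_le (ψ x') (ψ y') (f x') (f y')
    rw [Real.dist_eq] at h
    linarith [hfψ x' hx', hfψ y' hy', dist_comm (ψ x') (f x'), dist_comm (ψ y') (f y')]
  obtain ⟨T, hT⟩ := hf.exists_isometryEquiv hδ L.coe_nonneg hLδ hρ fun x' hx' y' hy' => by
    have h := mul_le_mul_of_nonneg_left (sub_le_iff_le_add'.1 (le_of_abs_le (hdist x' hx' y' hy')))
      L.coe_nonneg
    linarith [hL.le_mul_dist x' y']
  have hx : x ∈ closedBall x ρ := mem_closedBall_self hρ.le
  have hy : y ∈ closedBall x ρ := by rw [mem_closedBall, dist_comm]; linarith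
  have hsub : closedBall x ρ ⊆ closedBall x (ρ + δ) := closedBall_subset_closedBall (by linarith)
  have h := hdist x (hsub hx) y (hsub hy)
  rw [hT hx, hT hy, T.dist_eq] at h
  exact h.trans (by linarith [min_le_right (δ / (8 * L + 1)) (ε / 2)])

end Rigidity

/-- `S` is a monotone, measure preserving set map which moves the closed ball about `x` into the
closed ball of equal radius about `f x`, as the polarizations do along foldings. -/
structure TransportsBalls {X : Type*} [PseudoMetricSpace X] [MeasurableSpace X] (μ : Measure X)
    (S : Set X → Set X) (f : X → X) : Prop where
  monotone : Monotone S
  measurableSet : ∀ {A : Set X}, MeasurableSet A → MeasurableSet (S A)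
  measure_eq : ∀ {A : Set X}, MeasurableSet A → μ (S A) = μ A
  closedBall_subset : ∀ x r, S (closedBall x r) ⊆ closedBall (f x) r

namespace TransportsBalls

variable {X : Type*} [PseudoMetricSpace X] [MeasurableSpace X] {μ : Measure X}
  {S S' : Set X → Set X} {f f' : X → X}

protected theorem id : TransportsBalls μ (id : Set X → Set X) id where
  monotone := monotone_id
  measurableSet := id
  measure_eq _ := rfl
  closedBall_subset _ _ := subset_rfl

theorem comp (h' : TransportsBalls μ S' f') (h : TransportsBalls μ S f) :
    TransportsBalls μ (S' ∘ S) (f' ∘ f) where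
  monotone := h'.monotone.comp h.monotone
  measurableSet hA := h'.measurableSet (h.measurableSet hA)
  measure_eq hA := (h'.measure_eq (h.measurableSet hA)).trans (h.measure_eq hA)
  closedBall_subset x r :=
    (h'.monotone (h.closedBall_subset x r)).trans (h'.closedBall_subset (f x) r)

theorem dist_le (h : TransportsBalls μ S f) {A B G : Set X}
    (hA : MeasurableSet A) (hB : MeasurableSet B) (hBA : B ⊆ A) (hBμ : μ B ≠ ⊤) {x y : X}
    {R r : ℝ} (hBx : B ⊆ closedBall x R) (hG : closedBall y r ≤ᵐ[μ] G)
    (hlt : μ (A \ B) + μ (symmDiff (S A) G) < μ (closedBall y r)) : dist y (f x) ≤ r + R := by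
  by_contra! hd
  have hdisj : Disjoint (closedBall y r) (S B) := (closedBall_disjoint_closedBall hd).mono_right
    ((h.monotone hBx).trans (h.closedBall_subset x R))
  have hcover : closedBall y r ⊆ (S A \ S B) ∪ (closedBall y r \ S A) := fun z hz => by
    by_cases hzA : z ∈ S A
    · exact Or.inl ⟨hzA, Set.disjoint_left.1 hdisj hz⟩
    · exact Or.inr ⟨hz, hzA⟩
  have hSAB : μ (S A \ S B) = μ (A \ B) := by
    rw [measure_sdiff (h.monotone hBA) (h.measurableSet hB).nullMeasurableSet
      (by rwa [h.measure_eq hB]), measure_sdiff hBA hB.nullMeasurableSet hBμ, h.measure_eq hA,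
      h.measure_eq hB]
  have hGSA : μ (closedBall y r \ S A) ≤ μ (symmDiff (S A) G) :=
    (measure_mono_ae (hG.diff EventuallyLE.rfl)).trans (measure_mono le_sup_right)
  refine hlt.not_ge ?_
  calc μ (closedBall y r) ≤ μ (S A \ S B) + μ (closedBall y r \ S A) :=
        (measure_mono hcover).trans (measure_union_le _ _)
    _ ≤ μ (A \ B) + μ (symmDiff (S A) G) := add_le_add hSAB.le hGSA

end TransportsBalls

section Polarization

variable {n : ℕ} {v : Euc n}

theorem measurePreserving_hyperplaneReflection (v : Euc n) (c : ℝ) :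
    MeasurePreserving (hyperplaneReflection v c) :=
  (measurePreserving_add_right volume ((2 * c) • v)).comp
    ((ℝ ∙ v)ᗮ.reflection).measurePreserving

theorem mem_polzn (hv : ‖v‖ = 1) {c : ℝ} {A : Set (Euc n)} {x : Euc n} :
    x ∈ polzn v c A ↔ c ≤ ⟪x, v⟫ ∧ (x ∈ A ∨ hyperplaneReflection v c x ∈ A) ∨
      ⟪x, v⟫ ≤ c ∧ x ∈ A ∧ hyperplaneReflection v c x ∈ A := by
  rw [hyperplaneReflection_apply hv]
  rfl

theorem polzn_mono {A B : Set (Euc n)} (v : Euc n) (c : ℝ) (h : A ⊆ B) :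
    polzn v c A ⊆ polzn v c B := by
  rintro x (⟨hx, hA⟩ | ⟨hx, hA, hA'⟩)
  · exact Or.inl ⟨hx, hA.imp (@h _) (@h _)⟩
  · exact Or.inr ⟨hx, h hA, h hA'⟩

/-- The part of `A` which the polarization moves: the points on the negative side of the hyperplane
whose mirror image is not in `A`. -/
def polznMoved (v : Euc n) (c : ℝ) (A : Set (Euc n)) : Set (Euc n) :=
  {x | ⟪x, v⟫ < c} ∩ (A \ hyperplaneReflection v c ⁻¹' A)

theorem polzn_eq_union (hv : ‖v‖ = 1) (c : ℝ) (A : Set (Euc n)) :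
    polzn v c A = A \ polznMoved v c A ∪ hyperplaneReflection v c ⁻¹' polznMoved v c A := by
  ext x
  simp only [mem_polzn hv, polznMoved, Set.mem_union, Set.mem_sdiff, Set.mem_inter_iff,
    Set.mem_ofPred_eq, Set.mem_preimage, inner_hyperplaneReflection hv,
    hyperplaneReflection_involutive hv c x]
  rcases lt_trichotomy ⟪x, v⟫ c with h | h | h
  · simp only [h, h.le, h.not_ge, show ¬2 * c - ⟪x, v⟫ < c by linarith]
    tauto
  · simp only [h, hyperplaneReflection_eq_self hv h]
    tauto
  · simp only [h.le, h.not_ge, h.not_gt, show 2 * c - ⟪x, v⟫ < c by linarith]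
    tauto

theorem measurableSet_polznMoved (v : Euc n) (c : ℝ) {A : Set (Euc n)} (hA : MeasurableSet A) :
    MeasurableSet (polznMoved v c A) :=
  (measurableSet_lt (by fun_prop) measurable_const).inter
    (hA.diff ((measurePreserving_hyperplaneReflection v c).measurable hA))

theorem measurableSet_polzn (hv : ‖v‖ = 1) (c : ℝ) {A : Set (Euc n)} (hA : MeasurableSet A) :
    MeasurableSet (polzn v c A) := by
  have hM := measurableSet_polznMoved v c hA
  rw [polzn_eq_union hv]
  exact (hA.diff hM).union ((measurePreserving_hyperplaneReflection v c).measurable hM)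

theorem volume_polzn (hv : ‖v‖ = 1) (c : ℝ) {A : Set (Euc n)} (hA : MeasurableSet A) :
    volume (polzn v c A) = volume A := by
  have hM := measurableSet_polznMoved v c hA
  have hσ := measurePreserving_hyperplaneReflection v c
  have hMA : polznMoved v c A ⊆ A := fun x hx => hx.2.1
  have hdisj : Disjoint (A \ polznMoved v c A)
      (hyperplaneReflection v c ⁻¹' polznMoved v c A) := by
    refine Set.disjoint_left.2 fun x hx hx' => hx'.2.2 ?_
    rw [Set.mem_preimage, hyperplaneReflection_involutive hv]
    exact hx.1
  rw [polzn_eq_union hv, measure_union hdisj (hσ.measurable hM),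
    hσ.measure_preimage hM.nullMeasurableSet]
  simpa only [Set.inter_eq_self_of_subset_right hMA] using measure_sdiff_add_inter A hM

theorem polzn_closedBall_subset (hv : ‖v‖ = 1) (c : ℝ) (x : Euc n) (r : ℝ) :
    polzn v c (closedBall x r) ⊆ closedBall (hyperplaneFold v c x) r := by
  intro y hy
  simp only [mem_polzn hv, mem_closedBall, dist_hyperplaneReflection_left hv] at hy ⊢
  rcases hy with ⟨hyc, hy | hy⟩ | ⟨-, hy, hy'⟩
  · exact (dist_hyperplaneFold_le hv hyc x).trans hy
  · rw [← hyperplaneFold_hyperplaneReflection hv]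
    exact (dist_hyperplaneFold_le hv hyc _).trans hy
  · rcases hyperplaneFold_eq_or_eq v c x with h | h <;> rwa [h]

theorem transportsBalls_polzn (hv : ‖v‖ = 1) (c : ℝ) :
    TransportsBalls volume (polzn v c) (hyperplaneFold v c) where
  monotone _ _ := polzn_mono v c
  measurableSet := measurableSet_polzn hv c
  measure_eq := volume_polzn hv c
  closedBall_subset := polzn_closedBall_subset hv c

theorem isPolComp.exists_transportsBalls {S : Set (Euc n) → Set (Euc n)} (hS : isPolComp S) :
    ∃ f, IsFoldComp f ∧ TransportsBalls volume S f := by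
  obtain ⟨l, -, hl, rfl⟩ := hS
  induction l with
  | nil => exact ⟨id, .id, .id⟩
  | cons p l ih =>
    rw [List.forall_mem_cons] at hl
    obtain ⟨f, hf, hSf⟩ := ih hl.2
    exact ⟨_, hf.fold_comp hl.1 p.2, (transportsBalls_polzn hl.1 p.2).comp hSf⟩

end Polarization

section FiniteUnions

variable {n : ℕ}

theorem isFUB_closedBall (x : Euc n) {r : ℝ} (hr : 0 < r) : isFUB (closedBall x r) :=
  ⟨[(x, r)], by simp, by simpa, by simp⟩

theorem isFUB.union {A B : Set (Euc n)} (hA : isFUB A) (hB : isFUB B) : isFUB (A ∪ B) := by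
  obtain ⟨l, hl, hl0, rfl⟩ := hA
  obtain ⟨l', -, hl0', rfl⟩ := hB
  refine ⟨l ++ l', by simp [hl], fun p hp => (List.mem_append.1 hp).elim (hl0 p) (hl0' p), ?_⟩
  ext x
  simp [or_and_right, exists_or]

theorem isFUB.isCompact {A : Set (Euc n)} (hA : isFUB A) : IsCompact A := by
  obtain ⟨l, -, -, rfl⟩ := hA
  exact l.finite_toSet.isCompact_biUnion fun p _ => isCompact_closedBall p.1 p.2

end FiniteUnions

section TestSets

/-- If a set map `S` transporting balls along some `f` maps a slight enlargement of `A` close to a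
set `G` which contains `closedBall (ψ y) r` for each ball `closedBall y r` in the enlargement, then
`f ∈ U`. With `U` a neighbourhood of `ψ`, this lets the value of `S` at one set control `f`. -/
def IsTestSet {X : Type*} [PseudoMetricSpace X] [MeasurableSpace X] (μ : Measure X) (ψ : X → X)
    (U : Set (X → X)) (ε : ENNReal) (A : Set X) : Prop :=
  ∀ ⦃A' G : Set X⦄ ⦃S : Set X → Set X⦄ ⦃f : X → X⦄, MeasurableSet A' → A ⊆ A' →
    TransportsBalls μ S f →
    (∀ y r, 0 < r → closedBall y r ⊆ A' → closedBall (ψ y) r ≤ᵐ[μ] G) →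
    μ (A' \ A) + μ (symmDiff (S A') G) < ε → f ∈ U

namespace IsTestSet

variable {X : Type*} [PseudoMetricSpace X] [MeasurableSpace X] {μ : Measure X} {ψ : X → X}
  {U V : Set (X → X)} {ε ε' : ENNReal} {A B : Set X}

theorem inter (hU : IsTestSet μ ψ U ε A) (hV : IsTestSet μ ψ V ε A) :
    IsTestSet μ ψ (U ∩ V) ε A :=
  fun _ _ _ _ hA' hAA' hS hG hlt => ⟨hU hA' hAA' hS hG hlt, hV hA' hAA' hS hG hlt⟩

theorem mono (hA : IsTestSet μ ψ U ε A) (hAB : A ⊆ B) (hμ : μ (B \ A) ≠ ⊤)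
    (hε : μ (B \ A) + ε' ≤ ε) : IsTestSet μ ψ U ε' B := by
  intro A' G S f hA' hBA' hS hG hlt
  refine hA hA' (hAB.trans hBA') hS hG (lt_of_lt_of_le ?_ hε)
  calc μ (A' \ A) + μ (symmDiff (S A') G)
      ≤ μ (A' \ B) + μ (B \ A) + μ (symmDiff (S A') G) := by
        gcongr
        exact (measure_mono (sdiff_triangle A' B A)).trans (measure_union_le _ _)
    _ = μ (B \ A) + (μ (A' \ B) + μ (symmDiff (S A') G)) := by ring
    _ < μ (B \ A) + ε' := ENNReal.add_lt_add_left hμ hlt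

end IsTestSet

theorem sq_norm_le_of_norm_add_smul_le {E : Type*} [NormedAddCommGroup E] [InnerProductSpace ℝ E]
    {d e : E} {R r : ℝ} (he : ‖e‖ = 1) (h₁ : ‖d + R • e‖ ≤ R + 2 * r)
    (h₂ : ‖d - R • e‖ ≤ R + 2 * r) : ‖d‖ ^ 2 ≤ 4 * R * r + 4 * r ^ 2 := by
  have h := parallelogram_law_with_norm ℝ d (R • e)
  rw [norm_smul, he, mul_one, Real.norm_eq_abs, sq_abs] at h
  have h₁' := pow_le_pow_left₀ (norm_nonneg _) h₁ 2
  have h₂' := pow_le_pow_left₀ (norm_nonneg _) h₂ 2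
  linarith

variable {E : Type*} [NormedAddCommGroup E] [InnerProductSpace ℝ E] [FiniteDimensional ℝ E]
  [MeasurableSpace E] [BorelSpace E] {μ : Measure E} [μ.IsAddHaarMeasure] {e : E} {ψ : E → E}

/- As `ψ` keeps the distance between the two small balls, `f x` has to lie about half-way between
their images. -/
theorem isTestSet_of_closedBall_subset (he : ‖e‖ = 1)
    (hψe : ∀ x (s : ℝ), ψ (x + s • e) = ψ x + s • e) {B : Set E} (hB : MeasurableSet B) {x : E}
    {R r η : ℝ} (hr : 0 < r) (hη : 0 ≤ η) (hrη : 4 * R * r + 4 * r ^ 2 ≤ η ^ 2)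
    (hBx : B ⊆ closedBall x (R + r)) (h₁ : closedBall (x + R • e) r ⊆ B)
    (h₂ : closedBall (x + (-R) • e) r ⊆ B) :
    IsTestSet μ ψ {f | f x ∈ closedBall (ψ x) η} (μ (closedBall 0 r)) B := by
  intro A' G S f hA' hBA' hS hG hlt
  have hBμ : μ B ≠ ⊤ := ((measure_mono hBx).trans_lt measure_closedBall_lt_top).ne
  have hdist : ∀ s : ℝ, closedBall (x + s • e) r ⊆ B → dist (ψ x + s • e) (f x) ≤ R + 2 * r := by
    intro s hs
    refine (hS.dist_le (G := G) hA' hB hBA' hBμ hBx ?_ ?_).trans_eq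
      (by ring : r + (R + r) = R + 2 * r)
    · rw [← hψe]
      exact hG _ r hr (hs.trans hBA')
    · rwa [Measure.addHaar_closedBall_center]
  have hsq : ‖ψ x - f x‖ ^ 2 ≤ 4 * R * r + 4 * r ^ 2 := by
    refine sq_norm_le_of_norm_add_smul_le he ?_ ?_
    · rw [sub_add_eq_add_sub, ← dist_eq_norm]
      exact hdist R h₁
    · rw [sub_right_comm, sub_eq_add_neg (ψ x), ← neg_smul, ← dist_eq_norm]
      exact hdist (-R) h₂
  rw [Set.mem_ofPred_eq, mem_closedBall, dist_comm, dist_eq_norm]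
  exact le_of_sq_le_sq (hsq.trans hrη) hη

theorem tendsto_addHaar_closedBall_zero [Nontrivial E] (μ : Measure E) [μ.IsAddHaarMeasure] :
    Tendsto (fun r => μ (closedBall (0 : E) r)) (𝓝[>] 0) (𝓝 0) := by
  have h := tendsto_measure_cthickening_of_isCompact (μ := μ) (isCompact_singleton (x := (0 : E)))
  rw [measure_singleton] at h
  refine (h.mono_left nhdsWithin_le_nhds).congr' ?_
  filter_upwards [self_mem_nhdsWithin] with r hr
  rw [cthickening_singleton _ (le_of_lt hr)]

theorem exists_pos_addHaar_closedBall_le [Nontrivial E] (μ : Measure E) [μ.IsAddHaarMeasure]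
    {ε : ENNReal} (hε : 0 < ε) (R : ℝ) {η : ℝ} (hη : 0 < η) :
    ∃ r > 0, 3 * μ (closedBall 0 r) ≤ ε ∧ 4 * R * r + 4 * r ^ 2 ≤ η ^ 2 := by
  have hμ : Tendsto (fun r => 3 * μ (closedBall (0 : E) r)) (𝓝[>] 0) (𝓝 0) := by
    simpa using ENNReal.Tendsto.const_mul (tendsto_addHaar_closedBall_zero μ)
      (Or.inr (ENNReal.ofNat_ne_top (n := 3)))
  have hpoly : Tendsto (fun r : ℝ => 4 * R * r + 4 * r ^ 2) (𝓝[>] 0) (𝓝 0) := by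
    have : Continuous fun r : ℝ => 4 * R * r + 4 * r ^ 2 := by fun_prop
    simpa using (this.tendsto 0).mono_left nhdsWithin_le_nhds
  have hpos : ∀ᶠ r : ℝ in 𝓝[>] 0, 0 < r := self_mem_nhdsWithin
  exact (hpos.and ((hμ.eventually_le_const hε).and
    (hpoly.eventually_le_const (by positivity)))).exists

variable {n : ℕ} {e : Euc n} {ψ : Euc n → Euc n}

theorem IsTestSet.exists_isFUB_inter (he : ‖e‖ = 1)
    (hψe : ∀ x (s : ℝ), ψ (x + s • e) = ψ x + s • e) {U : Set (Euc n → Euc n)} {ε : ENNReal}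
    (hε : 0 < ε) {A : Set (Euc n)} (hA : isFUB A) (hUA : IsTestSet volume ψ U ε A) (x : Euc n)
    {η : ℝ} (hη : 0 < η) :
    ∃ B, isFUB B ∧ ∃ ε' > 0, IsTestSet volume ψ ({f | f x ∈ closedBall (ψ x) η} ∩ U) ε' B := by
  have : Nontrivial (Euc n) := nontrivial_of_ne e 0 (norm_ne_zero_iff.1 (by simp [he]))
  obtain ⟨R, hR, hAR⟩ := hA.isCompact.isBounded.subset_closedBall_lt 0 x
  obtain ⟨r, hr, hrε, hrη⟩ := exists_pos_addHaar_closedBall_le (volume : Measure (Euc n)) hε R hη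
  set C := closedBall (x + R • e) r ∪ closedBall (x + (-R) • e) r
  set V := volume (closedBall (0 : Euc n) r)
  have hCx : C ⊆ closedBall x (R + r) := by
    refine Set.union_subset ?_ ?_ <;> refine closedBall_subset_closedBall' ?_ <;>
      simp [norm_smul, he, abs_of_pos hR, add_comm]
  have hVC : volume C ≤ 2 * V := by
    refine (measure_union_le _ _).trans_eq ?_
    rw [Measure.addHaar_closedBall_center volume (x + R • e),
      Measure.addHaar_closedBall_center volume (x + (-R) • e), two_mul]
  have hV_top : V ≠ ⊤ := measure_closedBall_lt_top.ne
  have hCA : volume ((A ∪ C) \ A) ≤ 2 * V :=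
    (measure_mono (by simp [Set.union_sdiff_left])).trans hVC
  have hB : isFUB (A ∪ C) :=
    hA.union ((isFUB_closedBall _ hr).union (isFUB_closedBall _ hr))
  refine ⟨A ∪ C, hB, V, measure_closedBall_pos _ _ hr, .inter ?_ ?_⟩
  · exact isTestSet_of_closedBall_subset he hψe hB.isCompact.measurableSet hr hη.le hrη
      (Set.union_subset (hAR.trans (closedBall_subset_closedBall (by linarith))) hCx)
      (Set.subset_union_left.trans Set.subset_union_right)
      (Set.subset_union_right.trans Set.subset_union_right)
  · refine hUA.mono Set.subset_union_left (hCA.trans_lt (by finiteness)).ne ?_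
    calc volume ((A ∪ C) \ A) + V ≤ 2 * V + V := by gcongr
      _ = 3 * V := by ring
      _ ≤ ε := hrε

theorem exists_isFUB_isTestSet (he : ‖e‖ = 1)
    (hψe : ∀ x (s : ℝ), ψ (x + s • e) = ψ x + s • e) {U : Set (Euc n → Euc n)} (hU : U ∈ 𝓝 ψ) :
    ∃ A, isFUB A ∧ ∃ ε > 0, IsTestSet volume ψ U ε A := by
  rw [nhds_pi] at hU
  obtain ⟨⟨t, η⟩, ⟨ht, hη⟩, htU⟩ := (hasBasis_pi fun x => nhds_basis_closedBall).mem_iff.1 hU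
  suffices h : ∃ A, isFUB A ∧
      ∃ ε > 0, IsTestSet volume ψ (t.pi fun x => closedBall (ψ x) (η x)) ε A by
    obtain ⟨A, hA, ε, hε, hT⟩ := h
    exact ⟨A, hA, ε, hε, fun _ _ _ _ hA' hAA' hS hG hlt => htU (hT hA' hAA' hS hG hlt)⟩
  clear htU
  induction t, ht using Set.Finite.induction_on with
  | empty =>
    exact ⟨_, isFUB_closedBall 0 one_pos, 1, one_pos, fun _ _ _ _ _ _ _ _ _ => by simp⟩
  | @insert x t _ _ ih =>
    obtain ⟨A, hA, ε, hε, hT⟩ := ih fun y hy => hη y (Set.mem_insert_of_mem x hy)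
    rw [Set.insert_pi]
    exact hT.exists_isFUB_inter he hψe hε hA x (hη x (Set.mem_insert x t))

end TestSets

section WeakApproximation

variable {n : ℕ}

theorem mem_closure_isFoldComp {e : Euc n} (he : ‖e‖ = 1) {ψ : Euc n → Euc n}
    (hψe : ∀ x (s : ℝ), ψ (x + s • e) = ψ x + s • e)
    {D : Set (Euc n) → Set (Euc n)}
    (hD : ∀ (A : Set (Euc n)) y r, isFUB A → 0 < r → closedBall y r ⊆ A →
      closedBall (ψ y) r ≤ᵐ[volume] D A)
    (happrox : ∀ A, isFUB A → ∀ ε > 0, ∃ S, isPolComp S ∧ volume (sd (S A) (D A)) < ε) :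
    ψ ∈ closure {f | IsFoldComp f} := by
  refine mem_closure_iff_nhds.2 fun U hU => ?_
  obtain ⟨A, hA, ε, hε, hT⟩ := exists_isFUB_isTestSet he hψe hU
  obtain ⟨S, hS, hlt⟩ := happrox A hA ε hε
  obtain ⟨f, hf, hSf⟩ := hS.exists_transportsBalls
  refine ⟨f, hT hA.isCompact.measurableSet subset_rfl hSf (fun y r => hD A y r hA) ?_, hf⟩
  rwa [sdiff_self, Set.bot_eq_empty, measure_empty, zero_add]

theorem stmt15_general {e : Euc n} (he : ‖e‖ = 1) {ψ : Euc n → Euc n}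
    (hψe : ∀ x (s : ℝ), ψ (x + s • e) = ψ x + s • e) {L : NNReal} (hL : AntilipschitzWith L ψ)
    (hiso : ¬ Isometry ψ) {𝓔 : Set (Set (Euc n))}
    (hFUB𝓔 : ∀ A : Set (Euc n), isFUB A → A ∈ 𝓔)
    {D : Set (Euc n) → Set (Euc n)}
    (hmono : ∀ A ∈ 𝓔, ∀ B ∈ 𝓔, essSub A B → essSub (D A) (D B))
    (hψ : ∀ (x : Euc n) (r : ℝ), 0 < r → essEq (D (closedBall x r)) (closedBall (ψ x) r)) :
    ¬ ∀ A ∈ 𝓔, ∃ S : ℕ → Set (Euc n) → Set (Euc n),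
        (∀ k, isPolComp (S k)) ∧
        Tendsto (fun k => volume (sd (S k A) (D A))) atTop (𝓝 0) := by
  refine fun happrox => hiso (isometry_of_mem_closure_isFoldComp
    (mem_closure_isFoldComp (D := D) he hψe (fun A y r hA hr hyA => ?_) fun A hA ε hε => ?_) hL)
  · have hball : D (closedBall y r) =ᵐ[volume] closedBall (ψ y) r :=
      measure_symmDiff_eq_zero_iff.1 (hψ y r hr)
    refine hball.symm.le.trans (ae_le_set.2 ?_)
    refine hmono _ (hFUB𝓔 _ (isFUB_closedBall y hr)) _ (hFUB𝓔 A hA) ?_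
    rw [essSub, Set.sdiff_eq_empty.2 hyA, measure_empty]
  · obtain ⟨S, hS, hSA⟩ := happrox A (hFUB𝓔 A hA)
    obtain ⟨k, hk⟩ := (hSA.eventually_lt_const hε).exists
    exact ⟨S k, hS k, hk⟩

end WeakApproximation

section Brock

variable {E : Type*} [NormedAddCommGroup E] [InnerProductSpace ℝ E] {u : E}

/-- The contraction associated with the Brock set map with parameter `b` and hyperplane
`{x | ⟪x, u⟫ = t₀}`. -/
def brockContraction (u : E) (t₀ b : ℝ) (x : E) : E := x + ((b - 1) * (⟪x, u⟫ - t₀)) • u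

variable {t₀ b : ℝ}

theorem brockContraction_add_smul {e : E} (he : ⟪e, u⟫ = 0) (x : E) (s : ℝ) :
    brockContraction u t₀ b (x + s • e) = brockContraction u t₀ b x + s • e := by
  rw [brockContraction, brockContraction, inner_add_left, real_inner_smul_left, he, mul_zero,
    add_zero, add_right_comm]

theorem sq_dist_brockContraction (hu : ‖u‖ = 1) (x y : E) :
    dist (brockContraction u t₀ b x) (brockContraction u t₀ b y) ^ 2 =
      dist x y ^ 2 - (1 - b ^ 2) * ⟪x - y, u⟫ ^ 2 := by
  have h : brockContraction u t₀ b x - brockContraction u t₀ b y =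
      (x - y) + ((b - 1) * ⟪x - y, u⟫) • u := by
    rw [brockContraction, brockContraction, inner_sub_left]
    module
  rw [dist_eq_norm, dist_eq_norm, h, norm_add_sq_real, norm_smul, real_inner_smul_right, hu,
    mul_one, Real.norm_eq_abs, sq_abs]
  ring

theorem antilipschitzWith_brockContraction (hu : ‖u‖ = 1) (hb₀ : 0 < b) (hb₁ : b ≤ 1) :
    AntilipschitzWith (Real.toNNReal b)⁻¹ (brockContraction u t₀ b) := by
  refine AntilipschitzWith.of_le_mul_dist fun x y => ?_
  rw [NNReal.coe_inv, Real.coe_toNNReal _ hb₀.le, inv_mul_eq_div, le_div_iff₀' hb₀]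
  refine le_of_sq_le_sq ?_ dist_nonneg
  have hinner : ⟪x - y, u⟫ ^ 2 ≤ dist x y ^ 2 := by
    rw [dist_eq_norm, ← sq_abs]
    gcongr
    simpa only [hu, mul_one] using abs_real_inner_le_norm (x - y) u
  rw [sq_dist_brockContraction hu]
  nlinarith [mul_nonneg (sub_nonneg.2 hb₁) (by linarith : 0 ≤ 1 + b)]

theorem not_isometry_brockContraction (hu : ‖u‖ = 1) (hb₀ : 0 < b) (hb₁ : b < 1) :
    ¬ Isometry (brockContraction u t₀ b) := fun h => by
  have hsq := sq_dist_brockContraction (t₀ := t₀) (b := b) hu u 0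
  rw [h.dist_eq, sub_zero, inner_self_eq_one_of_norm_eq_one hu] at hsq
  nlinarith

end Brock

theorem exists_norm_eq_one_inner_eq_zero {E : Type*} [NormedAddCommGroup E]
    [InnerProductSpace ℝ E] (h : 2 ≤ Module.finrank ℝ E) (u : E) :
    ∃ e : E, ‖e‖ = 1 ∧ ⟪e, u⟫ = 0 := by
  have hbot : (ℝ ∙ u)ᗮ ≠ ⊥ := fun hbot => by
    have hcard := finrank_span_le_card (R := ℝ) ({u} : Set E)
    rw [Submodule.orthogonal_eq_bot_iff.1 hbot, finrank_top, Set.toFinset_singleton,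
      Finset.card_singleton] at hcard
    omega
  obtain ⟨w, hw, hw₀⟩ := Submodule.exists_mem_ne_zero_of_ne_bot hbot
  refine ⟨‖w‖⁻¹ • w, norm_smul_inv_norm hw₀, ?_⟩
  rw [real_inner_smul_left, Submodule.mem_orthogonal_singleton_iff_inner_left.1 hw, mul_zero]

/-- Corollary 7.6: for `𝓕ⁿₙ ⊂ 𝓔 ⊂ 𝓛ⁿ` and a hyperplane `H = u⊥ + t₀u`, the Brock set map
with parameter `0 < b < 1` (a map in `𝒥_H(𝓔)` whose associated contraction is
`x ↦ x + (b − 1)(⟪x,u⟫ − t₀)u`) cannot be weakly approximated on `𝓔` by finite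
compositions of polarizations. -/
theorem stmt15 {n : ℕ} (hn : 2 ≤ n) (u : Euc n) (hu : ‖u‖ = 1) (t₀ : ℝ)
    (b : ℝ) (hb0 : 0 < b) (hb1 : b < 1)
    (𝓔 : Set (Set (Euc n)))
    (hFUB𝓔 : ∀ A : Set (Euc n), isFUB A → A ∈ 𝓔)
    (h𝓔meas : ∀ A ∈ 𝓔, MeasurableSet A ∧ volume A ≠ ⊤)
    (D : Set (Euc n) → Set (Euc n))
    (hDmeas : ∀ A ∈ 𝓔, MeasurableSet (D A) ∧ volume (D A) ≠ ⊤)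
    (hmono : ∀ A ∈ 𝓔, ∀ B ∈ 𝓔, essSub A B → essSub (D A) (D B))
    (hmeaspres : ∀ A ∈ 𝓔, volume (D A) = volume A)
    (hballs : ∀ A ∈ 𝓔, (∃ (x : Euc n) (r : ℝ), 0 < r ∧ essEq A (closedBall x r)) →
        ∃ (x' : Euc n) (r' : ℝ), 0 < r' ∧ essEq (D A) (closedBall x' r'))
    (hcyl : ∀ A ∈ 𝓔, ∀ (c : Euc n) (ρ : ℝ), 0 < ρ →
        essSub A (cyl u c ρ) → essSub (D A) (cyl u c ρ))
    (hψ : ∀ (x : Euc n) (r : ℝ), 0 < r →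
        essEq (D (closedBall x r))
          (closedBall (x + ((b - 1) * (⟪x, u⟫ - t₀)) • u) r)) :
    ¬ ∀ A ∈ 𝓔, ∃ S : ℕ → Set (Euc n) → Set (Euc n),
        (∀ k, isPolComp (S k)) ∧
        Tendsto (fun k => volume (sd (S k A) (D A))) atTop (𝓝 0) := by
  obtain ⟨e, he, heu⟩ := exists_norm_eq_one_inner_eq_zero (by simpa using hn) u
  exact stmt15_general he (brockContraction_add_smul heu)
    (antilipschitzWith_brockContraction hu hb0 hb1.le) (not_isometry_brockContraction hu hb0 hb1)
    hFUB𝓔 hmono hψ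
end
end

section
/- For a ∈ ℝ, let P_a denote the polarization of subsets of ℝ with respect to the point a with the usual orientation: (P_a A) ∩ [a,∞) = (A ∪ (2a − A)) ∩ [a,∞) and (P_a A) ∩ (−∞,a] = (A ∩ (2a − A)) ∩ (−∞,a]. For m ∈ ℕ and A ⊂ ℝ, let A_{m,0} = P_0 ∘ P_{−1/2^m} ∘ P_{−2/2^m} ∘ ⋯ ∘ P_{−2^{2m}/2^m} A (the composition of the polarizations at the points k/2^m for k = −2^{2m}, −2^{2m}+1, …, −1, 0, applied in increasing order of k). Then for every compact set A ⊂ ℝ, the indicator functions 1_{A_{m,0}} converge in L¹(ℝ) as m → ∞ to the indicator function of the set [−r_A, r_A] ∪ (A ∩ [0,∞)), where r_A ≥ 0 is chosen so that 𝓗¹([−r_A, r_A] ∪ (A ∩ [0,∞))) = 𝓗¹(A). (The limit set is the image of A under the Solynin set map in ℝ with respect to {0} with the usual orientation.) -/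
open MeasureTheory Filter Topology

noncomputable section

/-- The polarization of `A ⊂ ℝ` with respect to the point `a`, with the usual orientation
of `ℝ`: `(P_a A) ∩ [a,∞) = (A ∪ (2a − A)) ∩ [a,∞)` and
`(P_a A) ∩ (−∞,a] = (A ∩ (2a − A)) ∩ (−∞,a]`. -/
def polzn1 (a : ℝ) (A : Set ℝ) : Set ℝ :=
  {x | a ≤ x ∧ (x ∈ A ∨ 2 * a - x ∈ A)} ∪ {x | x ≤ a ∧ x ∈ A ∧ 2 * a - x ∈ A}

/-- `A_{m,0} = P_0 ∘ P_{−1/2^m} ∘ ⋯ ∘ P_{−2^{2m}/2^m} A`: the composition of the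
polarizations at the points `k/2^m`, for `k = −2^{2m}, …, −1, 0`, applied in increasing
order of `k`. -/
def Am0 (m : ℕ) (A : Set ℝ) : Set ℝ :=
  (List.range (2 ^ (2 * m) + 1)).foldl
    (fun S j => polzn1 (((j : ℝ) - 2 ^ (2 * m)) / 2 ^ m) S) A

/-!
Sweep the polarizations from left to right with spacing `δ`, and let `B ⊇ A` be open of almost the
same volume. At every stage the mass passed over so far is, up to a loss, packed into an interval
`(u, v)` centred within `δ` of the current point. Polarizing at `b` moves its right end to
`w = 2b - u`, at most `2δ` further: either `[v, w]` lies in `B`, and the interval grows by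
`w - v`, or it is merely reflected, and the mass of `B` in `[v, w]` is lost. All the lost points
lie within `2δ` of the complement of `B` (or to the left of the starting point), so their total
mass tends to `0` with `δ`. When the sweep reaches `0` the interval is therefore nearly `[-r, r]`,
while `A ∩ [0, ∞)` has never been removed. Hence almost all of the Solynin image is covered, and
equality of the volumes gives convergence of the symmetric difference.
-/

open Set Metric ENNReal

section Polarization

variable {a u v : ℝ} {S T : Set ℝ}

lemma polzn1_mono (a : ℝ) (h : S ⊆ T) : polzn1 a S ⊆ polzn1 a T := by
  rintro x (⟨hax, hx⟩ | ⟨hxa, hx, hx'⟩)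
  · exact Or.inl ⟨hax, hx.imp (@h _) (@h _)⟩
  · exact Or.inr ⟨hxa, h hx, h hx'⟩

lemma inter_Ici_subset_polzn1 (a : ℝ) (S : Set ℝ) : S ∩ Ici a ⊆ polzn1 a S :=
  fun _ hx ↦ Or.inl ⟨hx.2, Or.inl hx.1⟩

lemma Ioo_reflect_subset_polzn1 (hS : Ioo u v ⊆ S) (huv : u + v ≤ 2 * a) :
    Ioo (2 * a - v) (2 * a - u) ⊆ polzn1 a S := by
  rintro x ⟨hvx, hxu⟩
  have hx' : 2 * a - x ∈ S := hS ⟨by linarith, by linarith⟩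
  rcases le_total a x with hax | hxa
  · exact Or.inl ⟨hax, Or.inr hx'⟩
  · exact Or.inr ⟨hxa, hS ⟨by linarith, by linarith⟩, hx'⟩

lemma nullMeasurableSet_preimage_reflect (a : ℝ) (hS : NullMeasurableSet S) :
    NullMeasurableSet ((fun x ↦ 2 * a - x) ⁻¹' S) :=
  hS.preimage (Measure.measurePreserving_sub_left volume (2 * a)).quasiMeasurePreserving

lemma nullMeasurableSet_polzn1 (a : ℝ) (hS : NullMeasurableSet S) :
    NullMeasurableSet (polzn1 a S) :=
  have hS' := nullMeasurableSet_preimage_reflect a hS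
  (measurableSet_Ici.nullMeasurableSet.inter (hS.union hS')).union
    (measurableSet_Iic.nullMeasurableSet.inter (hS.inter hS'))

lemma volume_eq_inter_Ioi_add_reflect (a : ℝ) (hS : NullMeasurableSet S) :
    volume S = volume (S ∩ Ioi a) + volume ((fun x ↦ 2 * a - x) ⁻¹' S ∩ Ioi a) := by
  have hreflect : (fun x ↦ 2 * a - x) ⁻¹' S ∩ Ioi a = (fun x ↦ 2 * a - x) ⁻¹' (S ∩ Iio a) := by
    ext x
    simp only [mem_inter_iff, mem_preimage, mem_Ioi, mem_Iio, and_congr_right_iff]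
    exact fun _ ↦ ⟨fun h ↦ by linarith, fun h ↦ by linarith⟩
  have hIio : volume (S ∩ Iio a) = volume (S ∩ Iic a) :=
    measure_congr ((ae_eq_refl S).inter Iio_ae_eq_Iic)
  rw [hreflect, (Measure.measurePreserving_sub_left volume (2 * a)).measure_preimage
    (hS.inter measurableSet_Iio.nullMeasurableSet), hIio, ← compl_Ioi, ← sdiff_eq,
    measure_inter_add_sdiff S measurableSet_Ioi]

lemma volume_polzn1 (a : ℝ) (hS : NullMeasurableSet S) : volume (polzn1 a S) = volume S := by
  set S' := (fun x ↦ 2 * a - x) ⁻¹' S with hS'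
  have hupper : polzn1 a S ∩ Ioi a = (S ∩ Ioi a) ∪ (S' ∩ Ioi a) := by
    ext x
    simp only [polzn1, hS', mem_inter_iff, mem_union, mem_ofPred_eq, mem_Ioi, mem_preimage]
    grind
  have hlower : (fun x ↦ 2 * a - x) ⁻¹' polzn1 a S ∩ Ioi a = (S ∩ Ioi a) ∩ (S' ∩ Ioi a) := by
    ext x
    simp only [polzn1, hS', mem_inter_iff, mem_union, mem_ofPred_eq, mem_Ioi, mem_preimage]
    grind
  rw [volume_eq_inter_Ioi_add_reflect a (nullMeasurableSet_polzn1 a hS), hupper, hlower,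
    measure_union_add_inter₀ _ ((nullMeasurableSet_preimage_reflect a hS).inter
      measurableSet_Ioi.nullMeasurableSet), ← volume_eq_inter_Ioi_add_reflect a hS]

end Polarization

section IteratedPolarization

/-- The composition `P_{p (n-1)} ∘ ⋯ ∘ P_{p 0}` of the polarizations at the first `n` terms of a
sequence of points; `Am0` is an instance along an arithmetic progression. -/
def iterPolzn (p : ℕ → ℝ) : ℕ → Set ℝ → Set ℝ
  | 0, A => A
  | n + 1, A => polzn1 (p n) (iterPolzn p n A)

variable {A B : Set ℝ} {p : ℕ → ℝ} {n : ℕ}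

lemma iterPolzn_mono (p : ℕ → ℝ) (n : ℕ) (h : A ⊆ B) : iterPolzn p n A ⊆ iterPolzn p n B := by
  induction n with
  | zero => exact h
  | succ n ih => exact polzn1_mono _ ih

lemma nullMeasurableSet_iterPolzn (p : ℕ → ℝ) (n : ℕ) (hA : NullMeasurableSet A) :
    NullMeasurableSet (iterPolzn p n A) := by
  induction n with
  | zero => exact hA
  | succ n ih => exact nullMeasurableSet_polzn1 _ ih

lemma volume_iterPolzn (p : ℕ → ℝ) (n : ℕ) (hA : NullMeasurableSet A) :
    volume (iterPolzn p n A) = volume A := by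
  induction n with
  | zero => rfl
  | succ n ih => exact (volume_polzn1 _ (nullMeasurableSet_iterPolzn p n hA)).trans ih

lemma inter_Ici_subset_iterPolzn {t : ℝ} (hp : ∀ j < n, p j ≤ t) (A : Set ℝ) :
    A ∩ Ici t ⊆ iterPolzn p n A := by
  induction n with
  | zero => exact inter_subset_left
  | succ n ih =>
    intro x hx
    exact inter_Ici_subset_polzn1 _ _
      ⟨ih (fun j hj ↦ hp j (hj.trans n.lt_succ_self)) hx, (hp n n.lt_succ_self).trans hx.2⟩

lemma volume_iterPolzn_sdiff_le {ε : ℝ≥0∞} (p : ℕ → ℝ) (n : ℕ) (hAB : A ⊆ B)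
    (hA : NullMeasurableSet A) (hB : NullMeasurableSet B) (hfin : volume A ≠ ∞)
    (hε : volume B ≤ volume A + ε) :
    volume (iterPolzn p n B \ iterPolzn p n A) ≤ ε := by
  have hvolA := volume_iterPolzn p n hA
  rw [measure_sdiff (iterPolzn_mono p n hAB) (nullMeasurableSet_iterPolzn p n hA) (by rwa [hvolA]),
    hvolA, volume_iterPolzn p n hB]
  exact tsub_le_iff_left.2 hε

lemma foldl_range_polzn1 (p : ℕ → ℝ) (n : ℕ) (A : Set ℝ) :
    (List.range n).foldl (fun S j ↦ polzn1 (p j) S) A = iterPolzn p n A := by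
  induction n with
  | zero => rfl
  | succ n ih => rw [List.range_succ, List.foldl_concat, ih, iterPolzn]

lemma Am0_eq_iterPolzn (m : ℕ) (A : Set ℝ) :
    Am0 m A = iterPolzn (fun j ↦ -2 ^ m + j * (1 / 2 ^ m)) (2 ^ (2 * m) + 1) A := by
  have hpoint (j : ℕ) : ((j : ℝ) - 2 ^ (2 * m)) / 2 ^ m = -2 ^ m + j * (1 / 2 ^ m) := by
    rw [pow_mul', pow_two]
    field_simp
    ring
  -- In `Am0` the list `List.range _` itself is coerced to `List ℝ`, hence the monadic bind.
  simp only [Am0, List.bind_eq_flatMap, List.pure_def, ← List.map_eq_flatMap, List.foldl_map,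
    hpoint, foldl_range_polzn1]

end IteratedPolarization

section VolumeBelow

variable {A : Set ℝ}

lemma volume_real_inter_Iic_le (hA : volume A ≠ ∞) (x y : ℝ) :
    volume.real (A ∩ Iic y) ≤ volume.real (A ∩ Iic x) + max (y - x) 0 := by
  have hcover : A ∩ Iic y ⊆ A ∩ Iic x ∪ Ioc x y := by
    rintro z ⟨hzA, hzy⟩
    exact (le_or_gt z x).imp (fun hzx ↦ ⟨hzA, hzx⟩) (fun hxz ↦ ⟨hxz, hzy⟩)
  have hfin : volume (A ∩ Iic x) ≠ ∞ := measure_ne_top_of_subset inter_subset_left hA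
  rw [← Real.volume_real_Ioc]
  exact (measureReal_mono hcover (measure_union_ne_top hfin measure_Ioc_lt_top.ne)).trans
    (measureReal_union_le _ _)

lemma lipschitzWith_volume_real_inter_Iic (hA : volume A ≠ ∞) :
    LipschitzWith 1 fun x ↦ volume.real (A ∩ Iic x) :=
  .of_le_add fun x y ↦ (volume_real_inter_Iic_le hA y x).trans <| by
    gcongr
    exact max_le (le_abs_self _) (abs_nonneg _)

lemma exists_two_mul_eq_volume_real_inter_Iic (hA : volume A ≠ ∞) :
    ∃ r : ℝ, 0 ≤ r ∧ 2 * r = volume.real (A ∩ Iic r) := by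
  have hcont : Continuous fun r ↦ 2 * r - volume.real (A ∩ Iic r) :=
    (continuous_const_mul 2).sub (lipschitzWith_volume_real_inter_Iic hA).continuous
  have hle : volume.real (A ∩ Iic (volume.real A)) ≤ volume.real A :=
    measureReal_mono inter_subset_left hA
  obtain ⟨r, hr, heq⟩ : 0 ∈ (fun r ↦ 2 * r - volume.real (A ∩ Iic r)) '' Icc 0 (volume.real A) :=
    intermediate_value_Icc measureReal_nonneg hcont.continuousOn
      ⟨by simp, by linarith [measureReal_nonneg (μ := volume) (s := A)]⟩
  exact ⟨r, hr.1, sub_eq_zero.1 heq⟩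

end VolumeBelow

section Solynin

/-- The candidate `[-r, r] ∪ (A ∩ [0, ∞))` for the image of `A` under the Solynin set map with
respect to `{0}`; it is that image when `r ≥ 0` is such that the volume of `A` is preserved. -/
def solynin (r : ℝ) (A : Set ℝ) : Set ℝ := Icc (-r) r ∪ (A ∩ Ici 0)

variable {A : Set ℝ} {r : ℝ}

lemma nullMeasurableSet_solynin (r : ℝ) (hA : NullMeasurableSet A) :
    NullMeasurableSet (solynin r A) :=
  measurableSet_Icc.nullMeasurableSet.union (hA.inter measurableSet_Ici.nullMeasurableSet)

lemma volume_solynin (hA : NullMeasurableSet A) (hr : 0 ≤ r) :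
    volume (solynin r A) = ENNReal.ofReal (2 * r) + volume (A ∩ Ioi r) := by
  have hsplit : solynin r A = Icc (-r) r ∪ (A ∩ Ioi r) := by
    ext x
    simp only [solynin, mem_union, mem_Icc, mem_inter_iff, mem_Ici, mem_Ioi]
    grind
  have hdisj : Disjoint (Icc (-r) r) (A ∩ Ioi r) :=
    disjoint_left.2 fun _ hx hx' ↦ hx'.2.not_ge hx.2
  rw [hsplit, measure_union₀ (hA.inter measurableSet_Ioi.nullMeasurableSet) hdisj.aedisjoint,
    Real.volume_Icc, sub_neg_eq_add, two_mul]

lemma volume_solynin_eq_iff (hA : NullMeasurableSet A) (hfin : volume A ≠ ∞) (hr : 0 ≤ r) :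
    volume (solynin r A) = volume A ↔ 2 * r = volume.real (A ∩ Iic r) := by
  have hA_split : volume A = volume (A ∩ Iic r) + volume (A ∩ Ioi r) := by
    rw [← compl_Iic, ← sdiff_eq, measure_inter_add_sdiff A measurableSet_Iic]
  have hfin_Iic : volume (A ∩ Iic r) ≠ ∞ := measure_ne_top_of_subset inter_subset_left hfin
  have hfin_Ioi : volume (A ∩ Ioi r) ≠ ∞ := measure_ne_top_of_subset inter_subset_left hfin
  rw [volume_solynin hA hr, hA_split, ENNReal.add_left_inj hfin_Ioi,
    ← ofReal_measureReal hfin_Iic, ENNReal.ofReal_eq_ofReal_iff (by positivity) measureReal_nonneg]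

end Solynin

section Sweep

/-- The invariant of a sweep by polarizations at points with spacing `δ`, before the polarization
at `b`: the part of `G` that has been passed over is packed into an interval `(u, v) ⊆ S` whose
centre is at most `δ` to the left of `b`. -/
def IsSwept (G : Set ℝ) (δ b : ℝ) (S : Set ℝ) : Prop :=
  ∃ u v : ℝ, Ioo u v ⊆ S ∧ (u + v) / 2 ∈ Icc (b - δ) b ∧ volume.real (G ∩ Iic v) ≤ v - u

variable {A B G S : Set ℝ} {a b r δ : ℝ}

lemma Icc_subset_or_disjoint_of_closedBall_subset (hGB : ∀ x ∈ G, closedBall x δ ⊆ B)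
    {v w : ℝ} (hvw : w - v ≤ δ) : Icc v w ⊆ B ∨ Disjoint G (Icc v w) := by
  refine or_iff_not_imp_right.2 fun hmeet ↦ ?_
  obtain ⟨x, hxG, hx⟩ := not_disjoint_iff.1 hmeet
  exact fun y hy ↦ hGB x hxG ((Real.dist_le_of_mem_Icc hy hx).trans hvw)

lemma IsSwept.polzn1 (hδ : 0 ≤ δ) (hG : volume G ≠ ∞)
    (hGB : ∀ x ∈ G, closedBall x (2 * δ) ⊆ B) (hBS : B ∩ Ici (b - δ) ⊆ S)
    (h : IsSwept G δ b S) : IsSwept G δ (b + δ) (polzn1 b S) := by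
  obtain ⟨u, v, hS, ⟨hlow, hup⟩, hvol⟩ := h
  have huv : u ≤ v := by linarith [measureReal_nonneg (μ := volume) (s := G ∩ Iic v)]
  obtain ⟨w, hw⟩ : ∃ w, w = 2 * b - u := ⟨_, rfl⟩
  have hvw : v ≤ w := by linarith
  rcases Icc_subset_or_disjoint_of_closedBall_subset hGB (v := v) (w := w) (by linarith)
    with hfill | hdisj
  · have hS' : Ioo u w ⊆ S := by
      intro x hx
      rcases lt_or_ge x v with hxv | hvx
      · exact hS ⟨hx.1, hxv⟩
      · exact hBS ⟨hfill ⟨hvx, hx.2.le⟩, by simp only [mem_Ici]; linarith⟩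
    refine ⟨u, w, ?_, ⟨by linarith, by linarith⟩, ?_⟩
    · simpa [hw] using Ioo_reflect_subset_polzn1 (a := b) hS' (by linarith)
    · have hgrow := volume_real_inter_Iic_le hG v w
      rw [max_eq_left (sub_nonneg.2 hvw)] at hgrow
      linarith
  · have hskip : G ∩ Iic w ⊆ G ∩ Iic v := fun x hx ↦
      ⟨hx.1, le_of_not_gt fun hvx ↦ disjoint_left.1 hdisj hx.1 ⟨hvx.le, hx.2⟩⟩
    have hvol' : volume.real (G ∩ Iic w) ≤ volume.real (G ∩ Iic v) :=
      measureReal_mono hskip (measure_ne_top_of_subset inter_subset_left hG)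
    exact ⟨2 * b - v, w, hw ▸ Ioo_reflect_subset_polzn1 hS (by linarith),
      ⟨by linarith, by linarith⟩, by linarith⟩

lemma isSwept_iterPolzn (hδ : 0 ≤ δ) (hG : volume G ≠ ∞)
    (hGB : ∀ x ∈ G, closedBall x (2 * δ) ⊆ B) (hGa : G ⊆ Ioi a) (n : ℕ) :
    IsSwept G δ (a + n * δ) (iterPolzn (fun j ↦ a + j * δ) n B) := by
  induction n with
  | zero =>
    have hempty : G ∩ Iic a = ∅ :=
      eq_empty_of_forall_notMem fun _ hx ↦ not_le_of_gt (mem_Ioi.1 (hGa hx.1)) hx.2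
    exact ⟨a, a, by simp, by simpa using hδ, by simp [hempty]⟩
  | succ n ih =>
    have hpoints (j : ℕ) (hj : j < n) : a + j * δ ≤ a + n * δ - δ := by
      have hj' : (j : ℝ) + 1 ≤ n := by exact_mod_cast hj
      nlinarith
    have hnext : a + (n + 1 : ℕ) * δ = a + n * δ + δ := by push_cast; ring
    rw [hnext]
    exact ih.polzn1 hδ hG hGB (inter_Ici_subset_iterPolzn hpoints B)

lemma IsSwept.volume_Icc_sdiff_le (h : IsSwept G δ δ S) (hδ : 0 ≤ δ) (hG : volume G ≠ ∞)
    (hA : volume A ≠ ∞) (hr : 2 * r = volume.real (A ∩ Iic r)) :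
    volume (Icc (-r) r \ S) ≤ 2 * (ENNReal.ofReal δ + volume (A \ G)) := by
  obtain ⟨u, v, hS, ⟨hlow, hup⟩, hvol⟩ := h
  have hfin : volume (A \ G) ≠ ∞ := measure_ne_top_of_subset sdiff_subset hA
  set κ := δ + volume.real (A \ G) with hκ
  have hκ0 : 0 ≤ volume.real (A \ G) := measureReal_nonneg
  have hmass : 2 * r ≤ v - u + max (r - v) 0 + volume.real (A \ G) := by
    have hcover : A ∩ Iic r ⊆ G ∩ Iic r ∪ A \ G := fun x hx ↦
      (em (x ∈ G)).imp (fun hxG ↦ ⟨hxG, hx.2⟩) (fun hxG ↦ ⟨hx.1, hxG⟩)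
    have hfin_union : volume (G ∩ Iic r ∪ A \ G) ≠ ∞ :=
      measure_union_ne_top (measure_ne_top_of_subset inter_subset_left hG) hfin
    linarith [measureReal_mono hcover hfin_union, volume_real_inter_Iic_le hG v r,
      measureReal_union_le (μ := volume) (G ∩ Iic r) (A \ G)]
  have hends : u ≤ -r + κ ∧ r - κ ≤ v := by
    rcases le_total r v with hrv | hvr
    · rw [max_eq_right (by linarith)] at hmass
      constructor <;> linarith
    · rw [max_eq_left (by linarith)] at hmass
      constructor <;> linarith
  have hcover : Icc (-r) r \ S ⊆ Icc (-r) (-r + κ) ∪ Icc (r - κ) r := by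
    rintro x ⟨⟨hrx, hxr⟩, hxS⟩
    rcases le_or_gt x u with hxu | hux
    · exact Or.inl ⟨hrx, by linarith⟩
    · have hvx : v ≤ x := le_of_not_gt fun hxv ↦ hxS (hS ⟨hux, hxv⟩)
      exact Or.inr ⟨by linarith, hxr⟩
  calc volume (Icc (-r) r \ S)
      ≤ volume (Icc (-r) (-r + κ)) + volume (Icc (r - κ) r) :=
        (measure_mono hcover).trans (measure_union_le _ _)
    _ = 2 * ENNReal.ofReal κ := by
        rw [Real.volume_Icc, Real.volume_Icc, add_sub_cancel_left,
          show r - (r - κ) = κ by ring, two_mul]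
    _ = 2 * (ENNReal.ofReal δ + volume (A \ G)) := by
        rw [hκ, ENNReal.ofReal_add hδ hκ0, ofReal_measureReal hfin]

end Sweep

section Core

/-- The part of `B` that a sweep from `a` with spacing `δ` cannot lose: the points beyond `a` whose
distance to the complement of `B` exceeds `2 * δ`. -/
def sweepCore (B : Set ℝ) (a δ : ℝ) : Set ℝ := Ioi a \ cthickening (2 * δ) Bᶜ

lemma closedBall_subset_of_mem_sweepCore {B : Set ℝ} {a δ x : ℝ} (hx : x ∈ sweepCore B a δ) :
    closedBall x (2 * δ) ⊆ B := by
  intro y hy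
  by_contra hyB
  exact hx.2 (mem_cthickening_of_dist_le x y _ _ hyB (dist_comm x y ▸ hy))

lemma sweepCore_subset (B : Set ℝ) (a δ : ℝ) : sweepCore B a δ ⊆ B := fun _ hx ↦
  not_notMem.1 fun hxB ↦ hx.2 (self_subset_cthickening _ hxB)

lemma tendsto_measure_Iic_atBot {α : Type*} [LinearOrder α] [Nonempty α] [NoMinOrder α]
    [(atBot : Filter α).IsCountablyGenerated] [TopologicalSpace α] [ClosedIicTopology α]
    [MeasurableSpace α] [OpensMeasurableSpace α] (μ : Measure α) [IsFiniteMeasure μ] :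
    Tendsto (fun x ↦ μ (Iic x)) atBot (𝓝 0) := by
  have h := tendsto_measure_iInter_atBot (μ := μ)
    (fun x : α ↦ measurableSet_Iic.nullMeasurableSet) (fun _ _ ↦ Iic_subset_Iic.2)
    ⟨Classical.arbitrary α, measure_ne_top _ _⟩
  rwa [iInter_Iic_eq_empty_iff.2 (by simp), measure_empty] at h

lemma tendsto_volume_sdiff_sweepCore {ι : Type*} {l : Filter ι} {A B : Set ℝ} {a δ : ι → ℝ}
    (hB : IsOpen B) (hAB : A ⊆ B) (hA : volume A ≠ ∞) (ha : Tendsto a l atBot)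
    (hδ : Tendsto δ l (𝓝 0)) :
    Tendsto (fun i ↦ volume (A \ sweepCore B (a i) (δ i))) l (𝓝 0) := by
  have : IsFiniteMeasure (volume.restrict A) := ⟨by simpa using hA.lt_top⟩
  have hedge : volume.restrict A Bᶜ = 0 := by
    rw [Measure.restrict_apply hB.measurableSet.compl, ← sdiff_eq_compl_inter,
      sdiff_eq_empty.2 hAB, measure_empty]
  have hthick : Tendsto (fun i ↦ volume.restrict A (cthickening (2 * δ i) Bᶜ)) l (𝓝 0) := by
    have h := tendsto_measure_cthickening_of_isClosed (μ := volume.restrict A)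
      ⟨1, one_pos, measure_ne_top _ _⟩ hB.isClosed_compl
    rw [hedge] at h
    exact h.comp (by simpa using hδ.const_mul 2)
  have hleft := (tendsto_measure_Iic_atBot (volume.restrict A)).comp ha
  refine tendsto_of_tendsto_of_tendsto_of_le_of_le tendsto_const_nhds
    (by simpa only [add_zero] using hleft.add hthick) (fun _ ↦ zero_le) fun i ↦ ?_
  have hcover : A \ sweepCore B (a i) (δ i) ⊆
      (Iic (a i) ∩ A) ∪ (cthickening (2 * δ i) Bᶜ ∩ A) := by
    rintro x ⟨hxA, hx⟩
    exact (le_or_gt x (a i)).imp (fun h ↦ ⟨h, hxA⟩)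
      (fun h ↦ ⟨not_notMem.1 fun hx' ↦ hx ⟨h, hx'⟩, hxA⟩)
  simpa only [Function.comp_apply, Measure.restrict_apply measurableSet_Iic,
    Measure.restrict_apply isClosed_cthickening.measurableSet] using
    (measure_mono hcover).trans (measure_union_le _ _)

end Core

section Convergence

variable {A B : Set ℝ} {r : ℝ}

lemma isSwept_Am0 (hB : volume B ≠ ∞) (m : ℕ) :
    IsSwept (sweepCore B (-2 ^ m) (1 / 2 ^ m)) (1 / 2 ^ m) (1 / 2 ^ m) (Am0 m B) := by
  have h := isSwept_iterPolzn (δ := 1 / 2 ^ m) (by positivity)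
    (measure_ne_top_of_subset (sweepCore_subset B (-2 ^ m) _) hB)
    (fun _ ↦ closedBall_subset_of_mem_sweepCore) sdiff_subset (2 ^ (2 * m) + 1)
  have hend : -2 ^ m + (2 ^ (2 * m) + 1 : ℕ) * (1 / 2 ^ m : ℝ) = 1 / 2 ^ m := by
    push_cast
    rw [pow_mul', pow_two]
    field_simp
    ring
  rwa [hend, ← Am0_eq_iterPolzn] at h

lemma inter_Ici_zero_subset_Am0 (m : ℕ) (A : Set ℝ) : A ∩ Ici 0 ⊆ Am0 m A := by
  rw [Am0_eq_iterPolzn]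
  refine inter_Ici_subset_iterPolzn (fun j hj ↦ ?_) A
  have hj' : (j : ℝ) ≤ 2 ^ m * 2 ^ m := by
    rw [← pow_two, ← pow_mul']
    exact_mod_cast Nat.lt_succ_iff.1 hj
  have hstep : (j : ℝ) * (1 / 2 ^ m) ≤ 2 ^ m := by
    rwa [mul_one_div, div_le_iff₀ (by positivity)]
  linarith

lemma volume_solynin_sdiff_Am0_le {ε : ℝ≥0∞} (hA : NullMeasurableSet A) (hfin : volume A ≠ ∞)
    (hr : 2 * r = volume.real (A ∩ Iic r)) (hAB : A ⊆ B) (hB : NullMeasurableSet B)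
    (hBfin : volume B ≠ ∞) (hε : volume B ≤ volume A + ε) (m : ℕ) :
    volume (solynin r A \ Am0 m A) ≤ 2 * (ENNReal.ofReal (1 / 2 ^ m) +
      volume (A \ sweepCore B (-2 ^ m) (1 / 2 ^ m))) + ε := by
  have hcover : solynin r A \ Am0 m A ⊆ (Icc (-r) r \ Am0 m B) ∪ (Am0 m B \ Am0 m A) := by
    rintro x ⟨hx | hx, hxA⟩
    · exact (em (x ∈ Am0 m B)).symm.imp (fun hxB ↦ ⟨hx, hxB⟩) (fun hxB ↦ ⟨hxB, hxA⟩)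
    · exact absurd (inter_Ici_zero_subset_Am0 m A hx) hxA
  refine (measure_mono hcover).trans ((measure_union_le _ _).trans (add_le_add ?_ ?_))
  · exact (isSwept_Am0 hBfin m).volume_Icc_sdiff_le (by positivity)
      (measure_ne_top_of_subset (sweepCore_subset B _ _) hBfin) hfin hr
  · simp only [Am0_eq_iterPolzn]
    exact volume_iterPolzn_sdiff_le _ _ hAB hA hB hfin hε

lemma tendsto_volume_solynin_sdiff_Am0 (hA : NullMeasurableSet A) (hfin : volume A ≠ ∞)
    (hr : 2 * r = volume.real (A ∩ Iic r)) :
    Tendsto (fun m ↦ volume (solynin r A \ Am0 m A)) atTop (𝓝 0) := by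
  refine ENNReal.tendsto_nhds_zero.2 fun ε hε ↦ ?_
  rcases eq_or_ne ε ∞ with rfl | hε_top
  · simp
  have hhalf : 0 < ε / 2 := ENNReal.half_pos hε.ne'
  obtain ⟨B, hAB, hB, hBvol⟩ := A.exists_isOpen_le_add volume hhalf.ne'
  have hBfin : volume B ≠ ∞ :=
    ne_top_of_le_ne_top (ENNReal.add_ne_top.2 ⟨hfin, ENNReal.div_ne_top hε_top two_ne_zero⟩) hBvol
  have hpow : Tendsto (fun m : ℕ ↦ (2 : ℝ) ^ m) atTop atTop :=
    tendsto_pow_atTop_atTop_of_one_lt one_lt_two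
  have hstep : Tendsto (fun m : ℕ ↦ 1 / (2 : ℝ) ^ m) atTop (𝓝 0) :=
    tendsto_const_nhds.div_atTop hpow
  have hloss : Tendsto (fun m : ℕ ↦ 2 * (ENNReal.ofReal (1 / 2 ^ m) +
      volume (A \ sweepCore B (-2 ^ m) (1 / 2 ^ m)))) atTop (𝓝 0) := by
    have hcore := tendsto_volume_sdiff_sweepCore hB hAB hfin
      (tendsto_neg_atTop_atBot.comp hpow) hstep
    simpa using ENNReal.Tendsto.const_mul ((ENNReal.tendsto_ofReal hstep).add hcore)
      (Or.inr ENNReal.ofNat_ne_top)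
  filter_upwards [ENNReal.tendsto_nhds_zero.1 hloss (ε / 2) hhalf] with m hm
  calc volume (solynin r A \ Am0 m A)
      ≤ 2 * (ENNReal.ofReal (1 / 2 ^ m) +
          volume (A \ sweepCore B (-2 ^ m) (1 / 2 ^ m))) + ε / 2 :=
        volume_solynin_sdiff_Am0_le hA hfin hr hAB hB.nullMeasurableSet hBfin hBvol m
    _ ≤ ε / 2 + ε / 2 := by gcongr
    _ = ε := ENNReal.add_halves ε

lemma tendsto_volume_symmDiff_Am0_solynin (hA : NullMeasurableSet A) (hfin : volume A ≠ ∞)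
    (hr : 0 ≤ r) (hvol : volume (solynin r A) = volume A) :
    Tendsto (fun m ↦ volume (symmDiff (Am0 m A) (solynin r A))) atTop (𝓝 0) := by
  have hlim := tendsto_volume_solynin_sdiff_Am0 hA hfin ((volume_solynin_eq_iff hA hfin hr).1 hvol)
  have hT := nullMeasurableSet_solynin r hA
  have hsymm (m : ℕ) : volume (symmDiff (Am0 m A) (solynin r A)) =
      volume (solynin r A \ Am0 m A) + volume (solynin r A \ Am0 m A) := by
    have hAm : NullMeasurableSet (Am0 m A) :=
      Am0_eq_iterPolzn m A ▸ nullMeasurableSet_iterPolzn _ _ hA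
    have hAm_vol : volume (Am0 m A) = volume A :=
      Am0_eq_iterPolzn m A ▸ volume_iterPolzn _ _ hA
    rw [measure_symmDiff_eq hAm hT, measure_sdiff_symm hAm hT (hAm_vol.trans hvol.symm)
      (measure_ne_top_of_subset inter_subset_left (hAm_vol ▸ hfin))]
  simpa only [hsymm, add_zero] using hlim.add hlim

end Convergence

theorem stmt19_general (A : Set ℝ) (hA : NullMeasurableSet A) (hfin : volume A ≠ ∞) :
    ∃ r : ℝ, 0 ≤ r ∧ volume (solynin r A) = volume A ∧
      Tendsto (fun m ↦ volume (symmDiff (Am0 m A) (solynin r A))) atTop (𝓝 0) := by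
  obtain ⟨r, hr, heq⟩ := exists_two_mul_eq_volume_real_inter_Iic hfin
  have hvol : volume (solynin r A) = volume A := (volume_solynin_eq_iff hA hfin hr).2 heq
  exact ⟨r, hr, hvol, tendsto_volume_symmDiff_Am0_solynin hA hfin hr hvol⟩

/-- Lemma 8.3: for every compact `A ⊂ ℝ`, the sets `A_{m,0}` converge in the `L¹` sense of
indicator functions to `[−r_A, r_A] ∪ (A ∩ [0,∞))`, the image of `A` under the Solynin set
map in `ℝ` with respect to `{0}` with the usual orientation, where `r_A ≥ 0` is chosen so
that this set has the same measure as `A`. -/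
theorem stmt19 (A : Set ℝ) (hA : IsCompact A) :
    ∃ r : ℝ, 0 ≤ r ∧
      volume (Set.Icc (-r) r ∪ (A ∩ Set.Ici 0)) = volume A ∧
      Tendsto (fun m =>
          volume ((Am0 m A \ (Set.Icc (-r) r ∪ (A ∩ Set.Ici 0))) ∪
            ((Set.Icc (-r) r ∪ (A ∩ Set.Ici 0)) \ Am0 m A)))
        atTop (𝓝 0) :=
  stmt19_general A hA.measurableSet.nullMeasurableSet hA.measure_lt_top.ne
end
end
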